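/- Let K(x)=±1/|x| on ℝ³ and let ρ ∈ L¹(ℝ³) ∩ L^∞(ℝ³) be nonnegative. Then the force field E = ∇K ∗ ρ is log-Lipschitz: there is a constant C > 0 depending only on ‖ρ‖_{L¹} + ‖ρ‖_{L^∞} such that for all x₁ ≠ x₂ in ℝ³, |E(x₁) − E(x₂)| ≤ C |x₁ − x₂| max(1, −ln|x₁ − x₂|). -/

import Mathlib

open MeasureTheory Real NNReal ENNReal RealInnerProductSpace
noncomputable section

/-- Physical space `ℝ³`. -/
abbrev E3 := EuclideanSpace ℝ (Fin 3)
/-- Phase space `ℝ⁶ = ℝ³ × ℝ³`. -/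
abbrev Z6 := E3 × E3

/-- `∇K` for the Coulomb kernel `K(x) = σ/|x|` (σ = ±1): `∇K(x) = -σ x/|x|³`. -/
noncomputable def gradK (σ : ℝ) (x : E3) : E3 := (-σ / ‖x‖ ^ 3) • x

/-- Spatial density `ρ_f(x) = ∫ f(x,ξ) dξ`. -/
noncomputable def rhoDen (f : E3 → E3 → ℝ) (x : E3) : ℝ := ∫ ξ : E3, f x ξ

/-- Self-induced force field `E_f = ∇K ∗ ρ_f`. -/
noncomputable def force (σ : ℝ) (f : E3 → E3 → ℝ) (x : E3) : E3 :=
  ∫ y : E3, rhoDen f y • gradK σ (x - y)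

/-- Gradient in the position variable. -/
noncomputable def gradX (f : E3 → E3 → ℝ) (x ξ : E3) : E3 := gradient (fun x' => f x' ξ) x

/-- Gradient in the velocity variable `∇_ξ f`. -/
noncomputable def gradV (f : E3 → E3 → ℝ) (x ξ : E3) : E3 := gradient (fun ξ' => f x ξ') ξ

/-- `f` is a nonnegative solution of the Vlasov–Poisson equation
`∂_t f + ξ·∇_x f + E_f·∇_ξ f = 0` for times in the set `S`. -/
noncomputable def IsVPSolutionOn (σ : ℝ) (S : Set ℝ) (f : ℝ → E3 → E3 → ℝ) : Prop :=
  (∀ t ∈ S, ∀ x ξ : E3, 0 ≤ f t x ξ) ∧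
  ∀ t ∈ S, ∀ x ξ : E3,
    deriv (fun s => f s x ξ) t + ⟪ξ, gradX (f t) x ξ⟫ +
      ⟪force σ (f t) x, gradV (f t) x ξ⟫ = 0

/-- The Lorentz `L^{3,1}(ℝ³)` (quasi-)norm of a real valued function,
`∫₀^∞ |{|g| > s}|^{1/3} ds`. -/
noncomputable def lorentz31 (g : E3 → ℝ) : ℝ≥0∞ :=
  ∫⁻ s in Set.Ioi (0:ℝ), (volume {x : E3 | s < |g x|}) ^ ((1:ℝ)/3)

/-- The weak `L^{3/2,∞}(ℝ³)` (quasi-)norm of a vector field,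
`sup_{s>0} s |{|g| > s}|^{2/3}`. -/
noncomputable def weakL32 (g : E3 → E3) : ℝ≥0∞ :=
  ⨆ s : ℝ≥0, (s : ℝ≥0∞) * (volume {x : E3 | (s : ℝ) < ‖g x‖}) ^ ((2:ℝ)/3)

/-- The function `x ↦ ∫ |∇_ξ f(x,ξ)| dξ`. -/
noncomputable def xiMargGradNorm (f : E3 → E3 → ℝ) (x : E3) : ℝ := ∫ ξ : E3, ‖gradV f x ξ‖

/-- `λ_f = ‖∇_ξ f‖_{L^{3,1}_x L¹_ξ}`. -/
noncomputable def lambdaL1 (f : E3 → E3 → ℝ) : ℝ≥0∞ := lorentz31 (xiMargGradNorm f)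

/-- `L¹(ℝ⁶)` distance of two phase-space functions. -/
noncomputable def L1diff (f g : E3 → E3 → ℝ) : ℝ≥0∞ := ∫⁻ z : Z6, ‖f z.1 z.2 - g z.1 z.2‖₊

/-- Pointwise square root of a phase-space density. -/
noncomputable def sqrtF (f : E3 → E3 → ℝ) (x ξ : E3) : ℝ := Real.sqrt (f x ξ)

/-- `‖∇_ξ g‖_{L³_x L²_ξ}`. -/
noncomputable def L3L2grad (g : E3 → E3 → ℝ) : ℝ≥0∞ :=
  (∫⁻ x : E3, (∫⁻ ξ : E3, ((‖gradV g x ξ‖₊ : ℝ≥0∞)) ^ (2:ℝ)) ^ ((3:ℝ)/2)) ^ ((1:ℝ)/3)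

/-- `λ_f` for the L² weak-strong estimate:
`‖ρ_f‖_{L^∞}^{1/2} ‖∇_ξ √f‖_{L³_x L²_ξ} + C_∞^{1/2} ‖∇_ξ √f‖_{L^{3,1}_x L¹_ξ}`. -/
noncomputable def lambdaL2 (Cinf : ℝ) (f : E3 → E3 → ℝ) : ℝ≥0∞ :=
  (eLpNorm (rhoDen f) ⊤ volume) ^ ((1:ℝ)/2) * L3L2grad (sqrtF f)
    + ENNReal.ofReal (Real.sqrt Cinf) * lorentz31 (xiMargGradNorm (sqrtF f))


lemma kernel_diff_aux (σ : ℝ) (hσ : σ = 1 ∨ σ = -1) (a b : E3) (hb : 0 < ‖b‖) (hab : ‖b‖ ≤ ‖a‖) :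
    ‖gradK σ a - gradK σ b‖ ≤ 4 * min (1 / ‖b‖ ^ 2) (‖a - b‖ / ‖b‖ ^ 3) := by
  have ha : 0 < ‖a‖ := lt_of_lt_of_le hb hab
  have hs : |σ| = 1 := by rcases hσ with h | h <;> simp [h]
  have hn : ∀ z : E3, 0 < ‖z‖ → ‖gradK σ z‖ = 1 / ‖z‖ ^ 2 := by
    intro z hz
    rw [gradK, norm_smul, norm_div, norm_neg, norm_pow, norm_norm, Real.norm_eq_abs, hs]
    field_simp
  rw [mul_min_of_nonneg _ _ (by norm_num : (0:ℝ) ≤ 4)]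
  apply le_min
  · have h1 : ‖gradK σ a‖ ≤ 1 / ‖b‖ ^ 2 := by
      rw [hn a ha]; gcongr
    have h2 := hn b hb
    have h3 := norm_sub_le (gradK σ a) (gradK σ b)
    have : 0 ≤ 1 / ‖b‖ ^ 2 := by positivity
    linarith
  · have e : gradK σ a - gradK σ b = (-σ / ‖a‖ ^ 3) • (a - b) + (-σ / ‖a‖ ^ 3 - -σ / ‖b‖ ^ 3) • b := by
      simp only [gradK]; module
    rw [e]
    refine (norm_add_le _ _).trans ?_
    rw [norm_smul, norm_smul, norm_div, norm_neg, norm_pow, norm_norm, Real.norm_eq_abs, hs]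
    have e2 : -σ / ‖a‖ ^ 3 - -σ / ‖b‖ ^ 3 = σ * ((‖a‖ ^ 3 - ‖b‖ ^ 3) / (‖a‖ ^ 3 * ‖b‖ ^ 3)) := by
      field_simp; ring
    rw [e2, norm_mul, Real.norm_eq_abs, hs, one_mul, Real.norm_eq_abs, abs_of_nonneg (by
      apply div_nonneg _ (by positivity)
      have : ‖b‖ ^ 3 ≤ ‖a‖ ^ 3 := by gcongr
      linarith)]
    have hd : ‖a‖ - ‖b‖ ≤ ‖a - b‖ := norm_sub_norm_le a b
    have hd0 : 0 ≤ ‖a - b‖ := norm_nonneg _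
    generalize ‖a - b‖ = d at *
    generalize ‖a‖ = s at *
    generalize ‖b‖ = t at *
    have i1 : 1 / s ^ 3 * d ≤ d / t ^ 3 := by
      rw [one_div_mul_eq_div]; gcongr
    have i2 : (s ^ 3 - t ^ 3) / (s ^ 3 * t ^ 3) * t ≤ 3 * (d / t ^ 3) := by
      have : (s ^ 3 - t ^ 3) * t ≤ 3 * d * s ^ 3 := by
        have k1 : s ^ 3 - t ^ 3 = (s - t) * (s ^ 2 + s * t + t ^ 2) := by ring
        have k2 : s ^ 2 + s * t + t ^ 2 ≤ 3 * s ^ 2 := by nlinarith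
        calc (s ^ 3 - t ^ 3) * t = (s - t) * (s ^ 2 + s * t + t ^ 2) * t := by rw [k1]
          _ ≤ d * (3 * s ^ 2) * s := by gcongr
          _ = _ := by ring
      rw [div_mul_eq_mul_div, ← mul_div_assoc, div_le_div_iff₀ (by positivity) (by positivity)]
      calc _ ≤ (3 * d * s ^ 3) * t ^ 3 := by gcongr
        _ = _ := by ring
    have : 4 * (d / t ^ 3) = d / t ^ 3 + 3 * (d / t ^ 3) := by ring
    linarith

/-- near-field majorant -/
def psiA (e r : ℝ) : ℝ := (Set.Ioc 0 e).indicator (fun r => 1 / r ^ 2) r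
/-- intermediate majorant -/
def psiB (d e r : ℝ) : ℝ := (Set.Ioc e 1).indicator (fun r => d / r ^ 3) r


lemma psiA_rad (e : ℝ) (he : 0 < e) :
    Integrable (fun z : E3 => psiA e ‖z‖) ∧
    ∫ z : E3, psiA e ‖z‖ = 3 * (volume : Measure E3).real (Metric.ball 0 1) * e := by
  have key : ∀ r : ℝ, r ^ (Module.finrank ℝ E3 - 1) • psiA e r
      = (Set.Ioc 0 e).indicator (fun _ => (1:ℝ)) r := by
    intro r
    simp only [finrank_euclideanSpace, Fintype.card_fin, psiA, smul_eq_mul]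
    by_cases h : r ∈ Set.Ioc 0 e
    · rw [Set.indicator_of_mem h, Set.indicator_of_mem h]
      have := h.1.ne'
      field_simp
    · rw [Set.indicator_of_notMem h, Set.indicator_of_notMem h, mul_zero]
  constructor
  · rw [integrable_fun_norm_addHaar volume (f := psiA e)]
    simp_rw [key]
    apply Integrable.integrableOn
    rw [integrable_indicator_iff measurableSet_Ioc]
    exact integrableOn_const (by simp)
  · rw [integral_fun_norm_addHaar volume (psiA e)]
    simp_rw [key]
    rw [setIntegral_indicator measurableSet_Ioc,
      Set.inter_eq_right.mpr (fun x hx => hx.1)]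
    simp [he.le, mul_assoc]

lemma psiB_rad (d e : ℝ) (he : 0 < e) (he1 : e ≤ 1) :
    Integrable (fun z : E3 => psiB d e ‖z‖) ∧
    ∫ z : E3, psiB d e ‖z‖ = 3 * (volume : Measure E3).real (Metric.ball 0 1) * (d * -Real.log e) := by
  have key : ∀ r : ℝ, r ^ (Module.finrank ℝ E3 - 1) • psiB d e r
      = (Set.Ioc e 1).indicator (fun r => d * (1 / r)) r := by
    intro r
    simp only [finrank_euclideanSpace, Fintype.card_fin, psiB, smul_eq_mul]
    by_cases h : r ∈ Set.Ioc e 1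
    · rw [Set.indicator_of_mem h, Set.indicator_of_mem h]
      have := (he.trans h.1).ne'
      field_simp
      ring
    · rw [Set.indicator_of_notMem h, Set.indicator_of_notMem h, mul_zero]
  constructor
  · rw [integrable_fun_norm_addHaar volume (f := psiB d e)]
    simp_rw [key]
    apply Integrable.integrableOn
    rw [integrable_indicator_iff measurableSet_Ioc]
    refine IntegrableOn.mono_set ?_ Set.Ioc_subset_Icc_self
    apply ContinuousOn.integrableOn_Icc
    refine continuousOn_const.mul (continuousOn_const.div continuousOn_id ?_)
    intro x hx
    exact (he.trans_le hx.1).ne'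
  · rw [integral_fun_norm_addHaar volume (psiB d e)]
    simp_rw [key]
    rw [setIntegral_indicator measurableSet_Ioc,
      Set.inter_eq_right.mpr (show Set.Ioc e 1 ⊆ Set.Ioi 0 from fun x hx => he.trans hx.1), ← intervalIntegral.integral_of_le he1,
      intervalIntegral.integral_const_mul, integral_one_div_of_pos he one_pos]
    simp [mul_assoc]

lemma min_le_psi (d : ℝ) (hd : 0 < d) (p M r : ℝ) (hp : 0 ≤ p) (hpM : p ≤ M) (hr : 0 < r) :
    p * min (1 / r ^ 2) (d / r ^ 3) ≤ M * (psiA (min d 1) r + psiB d (min d 1) r) + d * p := by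
  have hA : 0 ≤ psiA (min d 1) r := Set.indicator_nonneg (fun x _ => by positivity) _
  have hB : 0 ≤ psiB d (min d 1) r :=
    Set.indicator_nonneg (fun x hx => by
      have : 0 < x := (lt_min hd one_pos).trans hx.1
      positivity) _
  have hM : 0 ≤ M := hp.trans hpM
  have hm : 0 ≤ min (1 / r ^ 2) (d / r ^ 3) := by positivity
  by_cases h1 : r ≤ 1
  · have : min (1 / r ^ 2) (d / r ^ 3) ≤ psiA (min d 1) r + psiB d (min d 1) r := by
      by_cases h2 : r ≤ min d 1
      · have : psiA (min d 1) r = 1 / r ^ 2 := Set.indicator_of_mem (Set.mem_Ioc.mpr ⟨hr, h2⟩) _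
        have := min_le_left (1 / r ^ 2) (d / r ^ 3)
        linarith
      · have : psiB d (min d 1) r = d / r ^ 3 := Set.indicator_of_mem (Set.mem_Ioc.mpr ⟨not_le.mp h2, h1⟩) _
        have := min_le_right (1 / r ^ 2) (d / r ^ 3)
        linarith
    have := mul_le_mul hpM this hm hM
    have : 0 ≤ d * p := by positivity
    linarith
  · have h3 : d / r ^ 3 ≤ d := div_le_self hd.le (one_le_pow₀ (not_le.mp h1).le)
    have h4 := min_le_right (1 / r ^ 2) (d / r ^ 3)
    have h5 := mul_le_mul_of_nonneg_left (h4.trans h3) hp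
    have : 0 ≤ M * (psiA (min d 1) r + psiB d (min d 1) r) := by positivity
    linarith

lemma measurable_gradK (σ : ℝ) : Measurable (gradK σ) := by
  unfold gradK
  fun_prop

lemma norm_gradK_le (σ : ℝ) (hσ : σ = 1 ∨ σ = -1) (z : E3) (hz : 0 < ‖z‖) :
    ‖gradK σ z‖ = 1 / ‖z‖ ^ 2 := by
  have hs : |σ| = 1 := by rcases hσ with h | h <;> simp [h]
  rw [gradK, norm_smul, norm_div, norm_neg, norm_pow, norm_norm, Real.norm_eq_abs, hs]
  field_simp

lemma integrable_force (σ : ℝ) (hσ : σ = 1 ∨ σ = -1) (M : ℝ) (ρ : E3 → ℝ)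
    (hρ0 : ∀ x, 0 ≤ ρ x) (hint : Integrable ρ) (hM : ∀ᵐ y, ρ y ≤ M) (x : E3) :
    Integrable (fun y => ρ y • gradK σ (x - y)) := by
  have h1 : Integrable (fun y : E3 => M * psiA 1 ‖x - y‖ + ρ y) :=
    (((psiA_rad 1 one_pos).1.comp_sub_left x).const_mul M).add hint
  refine h1.mono' ?_ ?_
  · exact hint.aestronglyMeasurable.smul
      ((measurable_gradK σ).comp (measurable_const.sub measurable_id)).aestronglyMeasurable
  · filter_upwards [hM] with y hy
    have hA : 0 ≤ psiA 1 ‖x - y‖ := Set.indicator_nonneg (fun x _ => by positivity) _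
    have hM0 := (hρ0 y).trans hy
    rw [norm_smul, Real.norm_eq_abs, abs_of_nonneg (hρ0 y)]
    rcases (norm_nonneg (x - y)).eq_or_lt with h | h
    · have : x - y = 0 := norm_eq_zero.mp h.symm
      have h0 : gradK σ (x - y) = 0 := by simp [gradK, this]
      rw [h0, norm_zero, mul_zero]
      have := hρ0 y
      positivity
    · rw [norm_gradK_le σ hσ _ h]
      by_cases h1 : ‖x - y‖ ≤ 1
      · have : psiA 1 ‖x - y‖ = 1 / ‖x - y‖ ^ 2 := Set.indicator_of_mem (Set.mem_Ioc.mpr ⟨h, h1⟩) _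
        rw [this]
        have : ρ y * (1 / ‖x - y‖ ^ 2) ≤ M * (1 / ‖x - y‖ ^ 2) := by gcongr
        linarith [hρ0 y]
      · have : 1 / ‖x - y‖ ^ 2 ≤ 1 := by
          rw [div_le_one (by positivity)]; exact one_le_pow₀ (not_le.mp h1).le
        have := mul_le_mul_of_nonneg_left this (hρ0 y)
        have : 0 ≤ M * psiA 1 ‖x - y‖ := by positivity
        linarith

/-- **Log-Lipschitz regularity of the Coulomb force field:** if `ρ ∈ L¹ ∩ L^∞(ℝ³)` is
nonnegative, then `E = ∇K ∗ ρ` satisfies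
`|E(x₁) - E(x₂)| ≤ C |x₁-x₂| max(1, -ln|x₁-x₂|)` with `C` depending only on
`‖ρ‖_{L¹} + ‖ρ‖_{L^∞}`. -/
theorem force_log_lipschitz (σ : ℝ) (hσ : σ = 1 ∨ σ = -1) :
    ∀ M > (0:ℝ), ∃ C > (0:ℝ), ∀ ρ : E3 → ℝ, Measurable ρ → (∀ x, 0 ≤ ρ x) →
      eLpNorm ρ 1 volume + eLpNorm ρ ⊤ volume ≤ ENNReal.ofReal M →
      ∀ x₁ x₂ : E3, x₁ ≠ x₂ →
        ‖(∫ y : E3, ρ y • gradK σ (x₁ - y)) - ∫ y : E3, ρ y • gradK σ (x₂ - y)‖ ≤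
          C * ‖x₁ - x₂‖ * max 1 (-Real.log ‖x₁ - x₂‖) := by

  intro M hMpos
  set V := (volume : Measure E3).real (Metric.ball 0 1) with hV
  have hV0 : 0 ≤ V := measureReal_nonneg
  refine ⟨8 * (M * (6 * V) + M), by positivity, ?_⟩
  intro ρ hρm hρ0 hnorm x₁ x₂ hne
  have hn1 : eLpNorm ρ 1 volume ≤ ENNReal.ofReal M := le_self_add.trans hnorm
  have hn2 : eLpNorm ρ ⊤ volume ≤ ENNReal.ofReal M := le_add_self.trans hnorm
  have hint : Integrable ρ := by
    rw [← memLp_one_iff_integrable]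
    exact ⟨hρm.aestronglyMeasurable, hn1.trans_lt ENNReal.ofReal_lt_top⟩
  have hI : ∫ y, ρ y ≤ M := by
    rw [eLpNorm_one_eq_lintegral_enorm] at hn1
    rw [integral_eq_lintegral_of_nonneg_ae (Filter.Eventually.of_forall hρ0)
      hρm.aestronglyMeasurable]
    apply ENNReal.toReal_le_of_le_ofReal hMpos.le
    refine le_trans (le_of_eq ?_) hn1
    exact lintegral_congr fun y => (Real.enorm_eq_ofReal (hρ0 y)).symm
  have hM : ∀ᵐ y, ρ y ≤ M := by
    rw [eLpNorm_exponent_top] at hn2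
    filter_upwards [ae_le_eLpNormEssSup (f := ρ) (μ := volume)] with y hy
    have := hy.trans hn2
    rw [Real.enorm_eq_ofReal (hρ0 y)] at this
    exact (ENNReal.ofReal_le_ofReal_iff hMpos.le).mp this
  have hd : 0 < ‖x₁ - x₂‖ := norm_pos_iff.mpr (sub_ne_zero.mpr hne)
  rw [← integral_sub (integrable_force σ hσ M ρ hρ0 hint hM x₁)
    (integrable_force σ hσ M ρ hρ0 hint hM x₂)]
  set d := ‖x₁ - x₂‖ with hdd
  set e := min d 1 with hee
  have he : 0 < e := lt_min hd one_pos
  have he1 : e ≤ 1 := min_le_right _ _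
  obtain ⟨iA, vA⟩ := psiA_rad e he
  obtain ⟨iB, vB⟩ := psiB_rad d e he he1
  rw [← hV] at vA vB
  let G : E3 → E3 → ℝ := fun x y => M * (psiA e ‖x - y‖ + psiB d e ‖x - y‖) + d * ρ y
  have iAB : Integrable (fun z : E3 => psiA e ‖z‖ + psiB d e ‖z‖) := iA.add iB
  have hGi : ∀ x, Integrable (G x) := fun x =>
    ((iAB.comp_sub_left x).const_mul M).add (hint.const_mul d)
  have hGv : ∀ x, ∫ y, G x y = M * (3 * V * (e + d * -Real.log e)) + d * ∫ y, ρ y := by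
    intro x
    have h1 : ∫ y, (psiA e ‖x - y‖ + psiB d e ‖x - y‖) = 3 * V * (e + d * -Real.log e) := by
      rw [integral_sub_left_eq_self (fun z : E3 => psiA e ‖z‖ + psiB d e ‖z‖) volume x,
        integral_add iA iB, vA, vB]
      ring
    calc ∫ y, G x y = (∫ y, M * (psiA e ‖x - y‖ + psiB d e ‖x - y‖)) + ∫ y, d * ρ y :=
          integral_add ((iAB.comp_sub_left x).const_mul M) (hint.const_mul d)
      _ = _ := by rw [integral_const_mul, integral_const_mul, h1]
  have hpt : ∀ᵐ y, ‖ρ y • gradK σ (x₁ - y) - ρ y • gradK σ (x₂ - y)‖ ≤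
      4 * (G x₁ y + G x₂ y) := by
    have n1 : ∀ᵐ y : E3, y ≠ x₁ := by simp [ae_iff]
    have n2 : ∀ᵐ y : E3, y ≠ x₂ := by simp [ae_iff]
    filter_upwards [hM, n1, n2] with y hy h1 h2
    have p1 : 0 < ‖x₁ - y‖ := norm_pos_iff.mpr (sub_ne_zero.mpr h1.symm)
    have p2 : 0 < ‖x₂ - y‖ := norm_pos_iff.mpr (sub_ne_zero.mpr h2.symm)
    have g1 : ρ y * min (1 / ‖x₁ - y‖ ^ 2) (d / ‖x₁ - y‖ ^ 3) ≤ G x₁ y :=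
      min_le_psi d hd (ρ y) M _ (hρ0 y) hy p1
    have g2 : ρ y * min (1 / ‖x₂ - y‖ ^ 2) (d / ‖x₂ - y‖ ^ 3) ≤ G x₂ y :=
      min_le_psi d hd (ρ y) M _ (hρ0 y) hy p2
    have q1 : 0 ≤ ρ y * min (1 / ‖x₁ - y‖ ^ 2) (d / ‖x₁ - y‖ ^ 3) :=
      mul_nonneg (hρ0 y) (by positivity)
    have q2 : 0 ≤ ρ y * min (1 / ‖x₂ - y‖ ^ 2) (d / ‖x₂ - y‖ ^ 3) :=
      mul_nonneg (hρ0 y) (by positivity)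
    rw [← smul_sub, norm_smul, Real.norm_eq_abs, abs_of_nonneg (hρ0 y)]
    rcases le_total ‖x₂ - y‖ ‖x₁ - y‖ with h | h
    · have k := kernel_diff_aux σ hσ _ _ p2 h
      rw [sub_sub_sub_cancel_right, ← hdd] at k
      have := mul_le_mul_of_nonneg_left k (hρ0 y)
      linarith
    · have k := kernel_diff_aux σ hσ _ _ p1 h
      rw [sub_sub_sub_cancel_right, norm_sub_rev x₂ x₁, ← hdd, norm_sub_rev (gradK _ _)] at k
      have := mul_le_mul_of_nonneg_left k (hρ0 y)
      linarith
  have hfin := norm_integral_le_of_norm_le (((hGi x₁).add (hGi x₂)).const_mul 4) hpt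
  refine hfin.trans ?_
  have hval : ∫ y, 4 * (G x₁ + G x₂) y =
      8 * (M * (3 * V * (e + d * -Real.log e)) + d * ∫ y, ρ y) := by
    rw [integral_const_mul, integral_add' (hGi x₁) (hGi x₂), hGv, hGv]
    ring
  refine hval.le.trans ?_
  set m := max 1 (-Real.log d) with hm
  have hm1 : 1 ≤ m := le_max_left _ _
  have hlog : -Real.log e ≤ m := by
    rcases le_total d 1 with h | h
    · rw [hee, min_eq_left h]; exact le_max_right _ _
    · rw [hee, min_eq_right h, Real.log_one, neg_zero]; linarith
  have hed : e ≤ d * m := (min_le_left d 1).trans (le_mul_of_one_le_right hd.le hm1)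
  have b1 : e + d * -Real.log e ≤ 2 * (d * m) := by
    have := mul_le_mul_of_nonneg_left hlog hd.le
    linarith
  have b2 : d * ∫ y, ρ y ≤ M * (d * m) := by
    calc d * ∫ y, ρ y ≤ d * M := by gcongr
      _ ≤ d * M * m := le_mul_of_one_le_right (by positivity) hm1
      _ = _ := by ring
  calc 8 * (M * (3 * V * (e + d * -Real.log e)) + d * ∫ y, ρ y)
      ≤ 8 * (M * (3 * V * (2 * (d * m))) + M * (d * m)) := by gcongr
    _ = _ := by ring
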